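/- arXiv:2407.11538 — 12 statements merged into one kernel-verified Lean document; each statement's English description precedes it below -/
import Mathlib

section
/- For every topological space X, the ultrafilter space 𝔘X is a Salbany space; more precisely, 𝔘X is compact, locally compact, stable, and weakly sober. -/
open Set

/-- The ultrafilter space of a topological space: the set of ultrafilters on `X`,
topologised by the sets `O* = {F | O ∈ F}` for `O` open in `X`. -/
def UltraSpace (X : Type u) : Type u := Ultrafilter X

instance {X : Type u} : Membership (Set X) (UltraSpace X) :=
  inferInstanceAs (Membership (Set X) (Ultrafilter X))

instance UltraSpace.instTopologicalSpace {X : Type u} [TopologicalSpace X] :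
    TopologicalSpace (UltraSpace X) :=
  TopologicalSpace.generateFrom
    {s : Set (UltraSpace X) | ∃ O : Set X, IsOpen O ∧ s = {F : UltraSpace X | O ∈ F}}

/-- The unit `η_X : X → 𝔘X`, sending a point to the principal ultrafilter at it. -/
def UltraSpace.pureU {X : Type u} (x : X) : UltraSpace X := (pure x : Ultrafilter X)

/-- The pushforward `𝔘f` of ultrafilters along a map. -/
def UltraSpace.map {X Y : Type*} (f : X → Y) (F : UltraSpace X) : UltraSpace Y :=
  (Ultrafilter.map f (F : Ultrafilter X) : Ultrafilter Y)

/-- `O ≪ U`: every family of open sets covering `U` admits a finite subfamily covering `O`. -/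
def RelCpt {X : Type*} [TopologicalSpace X] (O U : Set X) : Prop :=
  ∀ 𝒞 : Set (Set X), (∀ V ∈ 𝒞, IsOpen V) → U ⊆ ⋃₀ 𝒞 →
    ∃ 𝒟 : Finset (Set X), ↑𝒟 ⊆ 𝒞 ∧ O ⊆ ⋃₀ (𝒟 : Set (Set X))

/-- A space is stable if `X ≪ X` and `≪` is finitely multiplicative on open sets. -/
def IsStable (X : Type*) [TopologicalSpace X] : Prop :=
  RelCpt (Set.univ : Set X) Set.univ ∧
    ∀ O U W V : Set X, IsOpen O → IsOpen U → IsOpen W → IsOpen V →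
      RelCpt O U → RelCpt W V → RelCpt (O ∩ W) (U ∩ V)


namespace UltraSpace

variable {X : Type u} [TopologicalSpace X]

def star (O : Set X) : Set (UltraSpace X) := {F : UltraSpace X | O ∈ F}

def toU (F : Ultrafilter X) : UltraSpace X := F

theorem continuous_toU : Continuous (toU : Ultrafilter X → UltraSpace X) := by
  refine continuous_generateFrom_iff.2 ?_
  rintro _ ⟨O, _, rfl⟩
  exact ultrafilter_isOpen_basic O

theorem isOpen_star {O : Set X} (hO : IsOpen O) : IsOpen (star O) :=
  TopologicalSpace.isOpen_generateFrom_of_mem ⟨O, hO, rfl⟩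

theorem isCompact_star (O : Set X) : IsCompact (star O) := by
  have h : IsCompact {F : Ultrafilter X | O ∈ F} := (ultrafilter_isClosed_basic O).isCompact
  have h2 := h.image (continuous_toU (X := X))
  have : star O = toU '' {F : Ultrafilter X | O ∈ F} := by
    ext F
    exact ⟨fun h => ⟨F, h, rfl⟩, by rintro ⟨G, h, rfl⟩; exact h⟩
  rw [this]; exact h2

theorem star_inter (A B : Set X) : star (A ∩ B) = star A ∩ star B := by
  ext F
  exact Filter.inter_mem_iff (f := ((show Ultrafilter X from F) : Filter X))

theorem star_univ : star (Set.univ : Set X) = Set.univ := by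
  ext F
  exact ⟨fun _ => trivial, fun _ =>
    Filter.univ_mem (f := ((show Ultrafilter X from F) : Filter X))⟩

theorem star_mono {A B : Set X} (h : A ⊆ B) : star A ⊆ star B := fun F hF =>
  Filter.mem_of_superset (f := ((show Ultrafilter X from F) : Filter X)) hF h

theorem star_union (A B : Set X) : star (A ∪ B) = star A ∪ star B := by
  ext F
  exact Ultrafilter.union_mem_iff (f := (show Ultrafilter X from F))

theorem star_empty : star (∅ : Set X) = ∅ := by
  ext F
  exact ⟨fun h => (Ultrafilter.empty_notMem (f := (show Ultrafilter X from F)) h).elim,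
    fun h => h.elim⟩

theorem basis : TopologicalSpace.IsTopologicalBasis
    {s : Set (UltraSpace X) | ∃ O : Set X, IsOpen O ∧ s = star O} where
  exists_subset_inter := by
    rintro _ ⟨A, hA, rfl⟩ _ ⟨B, hB, rfl⟩ F hF
    exact ⟨_, ⟨A ∩ B, hA.inter hB, rfl⟩, by rwa [star_inter], by rw [star_inter]⟩
  sUnion_eq := by
    refine Set.eq_univ_of_univ_subset fun F _ => ⟨_, ⟨Set.univ, isOpen_univ, rfl⟩, ?_⟩
    rw [star_univ]; trivial
  eq_generateFrom := rfl

theorem relCpt_interp {O U : Set (UltraSpace X)} (hU : IsOpen U) (h : RelCpt O U) :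
    ∃ A : Set X, IsOpen A ∧ O ⊆ star A ∧ star A ⊆ U := by
  obtain ⟨D, hD, hO⟩ := h {s | (∃ A : Set X, IsOpen A ∧ s = star A) ∧ s ⊆ U}
    (by rintro _ ⟨⟨A, hA, rfl⟩, _⟩; exact isOpen_star hA)
    (by
      intro F hF
      obtain ⟨s, hs, hFs, hsU⟩ := basis.exists_subset_of_mem_open hF hU
      exact ⟨s, ⟨hs, hsU⟩, hFs⟩)
  suffices H : ∃ A : Set X, IsOpen A ∧ ⋃₀ (D : Set (Set (UltraSpace X))) = star A by
    obtain ⟨A, hA, hE⟩ := H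
    refine ⟨A, hA, hE ▸ hO, hE ▸ ?_⟩
    exact Set.sUnion_subset fun s hs => (hD hs).2
  clear hO
  classical
  induction D using Finset.induction_on with
  | empty => exact ⟨∅, isOpen_empty, by simp [star_empty]⟩
  | insert s D _ ih =>
    rw [Finset.coe_insert, Set.insert_subset_iff] at hD
    obtain ⟨A, hA, hE⟩ := ih hD.2
    obtain ⟨⟨B, hB, rfl⟩, _⟩ := hD.1
    exact ⟨B ∪ A, hB.union hA, by
      rw [Finset.coe_insert, Set.sUnion_insert, hE, star_union]⟩

theorem relCpt_of_compact {O K U : Set (UltraSpace X)} (hK : IsCompact K) (h1 : O ⊆ K)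
    (h2 : K ⊆ U) : RelCpt O U := by
  intro C hC hUC
  obtain ⟨T, hT, hf, hK⟩ := hK.elim_finite_subcover_image (b := C) (c := id) hC
    (by rw [Set.sUnion_eq_biUnion] at hUC; exact h2.trans hUC)
  refine ⟨hf.toFinset, by simpa using hT, ?_⟩
  rw [hf.coe_toFinset, Set.sUnion_eq_biUnion]
  exact h1.trans hK

theorem sober : QuasiSober (UltraSpace X) where
  sober := by
    intro S hS hSc
    let ι := {O : Set X // IsOpen O ∧ (S ∩ star O).Nonempty}
    have : Nonempty ι := ⟨⟨Set.univ, isOpen_univ, by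
      rw [star_univ, Set.inter_univ]; exact hS.1⟩⟩
    have key : (⋂ i : ι, toU ⁻¹' (S ∩ star i.1) : Set (Ultrafilter X)).Nonempty := by
      have hcl : ∀ i : ι, IsClosed (toU ⁻¹' (S ∩ star i.1) : Set (Ultrafilter X)) := fun i =>
        (hSc.preimage continuous_toU).inter (ultrafilter_isClosed_basic i.1)
      refine IsCompact.nonempty_iInter_of_directed_nonempty_isCompact_isClosed _ ?_ ?_
        (fun i => (hcl i).isCompact) hcl
      · rintro ⟨A, hA, hA'⟩ ⟨B, hB, hB'⟩
        refine ⟨⟨A ∩ B, hA.inter hB, ?_⟩, ?_, ?_⟩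
        · rw [star_inter]
          exact hS.2 _ _ (isOpen_star hA) (isOpen_star hB) hA' hB'
        · exact Set.preimage_mono (Set.inter_subset_inter_right _ (star_mono Set.inter_subset_left))
        · exact Set.preimage_mono (Set.inter_subset_inter_right _ (star_mono Set.inter_subset_right))
      · rintro ⟨A, hA, F, hF⟩
        exact ⟨F, hF⟩
    obtain ⟨F, hF⟩ := key
    rw [Set.mem_iInter] at hF
    refine ⟨toU F, ?_⟩
    refine Set.Subset.antisymm (hSc.closure_subset_iff.2 ?_) ?_
    · rintro _ rfl
      exact (hF (Classical.arbitrary ι)).1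
    · intro G hG
      rw [basis.mem_closure_iff]
      rintro _ ⟨O, hO, rfl⟩ hGO
      exact ⟨toU F, (hF ⟨O, hO, G, hG, hGO⟩).2, rfl⟩

end UltraSpace

/-- for every topological space `X`, the ultrafilter space `𝔘X` is compact,
locally compact, stable and weakly sober (quasi-sober); in particular it is a Salbany space. -/
theorem stmt1 (X : Type u) [TopologicalSpace X] :
    CompactSpace (UltraSpace X) ∧ LocallyCompactSpace (UltraSpace X) ∧
      IsStable (UltraSpace X) ∧ QuasiSober (UltraSpace X) := by
  have hc : IsCompact (Set.univ : Set (UltraSpace X)) := by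
    rw [← UltraSpace.star_univ]; exact UltraSpace.isCompact_star _
  refine ⟨⟨hc⟩, ⟨?_⟩, ⟨UltraSpace.relCpt_of_compact hc subset_rfl subset_rfl, ?_⟩,
    UltraSpace.sober⟩
  · intro F n hn
    obtain ⟨_, ⟨O, hO, rfl⟩, hF, hs⟩ := UltraSpace.basis.mem_nhds_iff.1 hn
    exact ⟨_, (UltraSpace.isOpen_star hO).mem_nhds hF, hs, UltraSpace.isCompact_star O⟩
  · intro O U W V _ hU _ hV h1 h2
    obtain ⟨A, hA, hOA, hAU⟩ := UltraSpace.relCpt_interp hU h1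
    obtain ⟨B, hB, hWB, hBV⟩ := UltraSpace.relCpt_interp hV h2
    refine UltraSpace.relCpt_of_compact (UltraSpace.isCompact_star (A ∩ B)) ?_ ?_
    · rw [UltraSpace.star_inter]; exact Set.inter_subset_inter hOA hWB
    · rw [UltraSpace.star_inter]; exact Set.inter_subset_inter hAU hBV
end

section
/- A topological space X is a Salbany space (i.e., locally compact, stable, and weakly sober) if and only if the embedding η_X : X → 𝔘X, x ↦ pure x, admits a continuous retraction, i.e., there exists a continuous map r : 𝔘X → X with r(pure x) = x for all x ∈ X. -/
open Set

/-- A Salbany space: locally compact, stable and weakly sober (quasi-sober). -/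
def IsSalbany (X : Type*) [TopologicalSpace X] : Prop :=
  LocallyCompactSpace X ∧ IsStable X ∧ QuasiSober X

namespace SalbanyAux

variable {X : Type u} [TopologicalSpace X]

/-- limit set -/
def L (F : Ultrafilter X) : Set X := {x | ∀ U : Set X, IsOpen U → x ∈ U → U ∈ F}

theorem relcpt_of_compact {O K U : Set X} (hK : IsCompact K) (h1 : O ⊆ K) (h2 : K ⊆ U) :
    RelCpt O U := by
  intro C hC hU
  obtain ⟨t, ht, hf, hcov⟩ := hK.elim_finite_subcover_image (c := id) hC
    (by simpa [sUnion_eq_biUnion] using h2.trans hU)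
  exact ⟨hf.toFinset, by simpa using ht, by simpa [sUnion_eq_biUnion] using h1.trans hcov⟩

theorem lim_of_relcpt {O U : Set X} (h : RelCpt O U) (F : Ultrafilter X) (hO : O ∈ F) :
    ∃ x ∈ U, x ∈ L F := by
  by_contra! hc
  obtain ⟨D, hD, hcov⟩ := h {V | IsOpen V ∧ V ∉ F} (fun V hV => hV.1) (by
    intro x hx
    have := hc x hx
    simp only [L, mem_ofPred_eq, not_forall] at this
    obtain ⟨V, h1, h2, h3⟩ := this
    exact ⟨V, ⟨h1, h3⟩, h2⟩)
  have h1 : ⋃₀ (D : Set (Set X)) ∈ F := Filter.mem_of_superset hO hcov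
  rw [Ultrafilter.finite_sUnion_mem_iff D.finite_toSet] at h1
  obtain ⟨V, hV, hVF⟩ := h1
  exact (hD hV).2 hVF

theorem isClosed_L (F : Ultrafilter X) : IsClosed (L F) := by
  rw [← isOpen_compl_iff, isOpen_iff_forall_mem_open]
  intro x hx
  simp only [L, mem_compl_iff, mem_ofPred_eq, not_forall] at hx
  obtain ⟨V, h1, h2, h3⟩ := hx
  exact ⟨V, fun y hy hyL => h3 (hyL V h1 hy), h1, h2⟩

theorem interp [LocallyCompactSpace X] {U : Set X} (hU : IsOpen U) {x : X} (hx : x ∈ U) :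
    ∃ O, IsOpen O ∧ x ∈ O ∧ RelCpt O U := by
  obtain ⟨K, hK, hxK, hKU⟩ := exists_compact_subset hU hx
  exact ⟨interior K, isOpen_interior, hxK, relcpt_of_compact hK interior_subset hKU⟩

theorem irr_L [LocallyCompactSpace X] (hs : IsStable X) (F : Ultrafilter X) :
    IsIrreducible (L F) := by
  constructor
  · obtain ⟨x, -, hx⟩ := lim_of_relcpt hs.1 F Filter.univ_mem
    exact ⟨x, hx⟩
  · rintro U V hU hV ⟨x, hxL, hxU⟩ ⟨y, hyL, hyV⟩
    obtain ⟨O, hO, hxO, hOU⟩ := interp hU hxU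
    obtain ⟨W, hW, hyW, hWV⟩ := interp hV hyV
    obtain ⟨z, hz, hzL⟩ := lim_of_relcpt (hs.2 O U W V hO hU hW hV hOU hWV) F
      (Filter.inter_mem (hxL O hO hxO) (hyL W hW hyW))
    exact ⟨z, hzL, hz⟩

theorem L_pure (x : X) : L (pure x : Ultrafilter X) = closure {x} := by
  ext y
  simp only [L, mem_ofPred_eq, mem_closure_iff, Ultrafilter.mem_pure]
  refine forall_congr' fun U => forall_congr' fun _ => forall_congr' fun _ => ?_
  simp

theorem isOpen_star {O : Set X} (hO : IsOpen O) : IsOpen {F : UltraSpace X | O ∈ F} :=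
  TopologicalSpace.isOpen_generateFrom_of_mem ⟨O, hO, rfl⟩

theorem basis : TopologicalSpace.IsTopologicalBasis
    {s : Set (UltraSpace X) | ∃ O : Set X, IsOpen O ∧ s = {F : UltraSpace X | O ∈ F}} := by
  refine ⟨?_, ?_, rfl⟩
  · rintro _ ⟨O, hO, rfl⟩ _ ⟨W, hW, rfl⟩ F ⟨h1, h2⟩
    refine ⟨_, ⟨O ∩ W, hO.inter hW, rfl⟩, ?_, ?_⟩
    · exact Filter.inter_mem (f := (F : Ultrafilter X).toFilter) h1 h2
    · intro G hG
      exact ⟨Filter.mem_of_superset (f := Ultrafilter.toFilter G) hG inter_subset_left,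
        Filter.mem_of_superset (f := Ultrafilter.toFilter G) hG inter_subset_right⟩
  · refine eq_univ_of_forall fun F => ⟨_, ⟨univ, isOpen_univ, rfl⟩, ?_⟩
    exact Filter.univ_mem (f := Ultrafilter.toFilter F)

/-- identity map -/
def toU (F : Ultrafilter X) : UltraSpace X := F

theorem compact_star (O : Set X) : IsCompact {F : UltraSpace X | O ∈ F} := by
  have hc : Continuous (toU (X := X)) := by
    refine continuous_generateFrom_iff.2 ?_
    rintro _ ⟨O, hO, rfl⟩
    exact ultrafilter_isOpen_basic O
  have h := (ultrafilter_isClosed_basic O).isCompact.image hc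
  have e : {F : UltraSpace X | O ∈ F} =
      (toU (X := X)) '' {F : Ultrafilter X | O ∈ F} := by
    ext F
    exact ⟨fun hF => ⟨F, hF, rfl⟩, fun ⟨G, hG, hGF⟩ => hGF ▸ hG⟩
  rw [e]
  exact h

theorem forward (h : IsSalbany X) :
    ∃ r : UltraSpace X → X, Continuous r ∧ ∀ x : X, r (UltraSpace.pureU x) = x := by
  obtain ⟨hl, hs, hq⟩ := h
  have key : ∀ F : UltraSpace X, ∃ y : X, closure {y} = L (F : Ultrafilter X) ∧
      ∀ x, F = UltraSpace.pureU x → y = x := by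
    intro F
    by_cases hF : ∃ x, F = UltraSpace.pureU x
    · obtain ⟨x, rfl⟩ := hF
      refine ⟨x, (L_pure x).symm, fun z hz => ?_⟩
      exact Ultrafilter.pure_injective hz
    · obtain ⟨y, hy⟩ := hq.sober (irr_L hs F) (isClosed_L _)
      exact ⟨y, hy, fun x hx => (hF ⟨x, hx⟩).elim⟩
  choose r hr hr' using key
  refine ⟨r, ?_, fun x => hr' _ x rfl⟩
  refine continuous_def.2 fun U hU => ?_
  rw [isOpen_iff_forall_mem_open]
  intro F hF
  obtain ⟨O, hO, hxO, hOU⟩ := interp hU hF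
  have hrL : r F ∈ L (F : Ultrafilter X) := hr F ▸ subset_closure rfl
  refine ⟨_, ?_, isOpen_star hO, hrL O hO hxO⟩
  intro G hG
  obtain ⟨z, hzU, hz⟩ := lim_of_relcpt hOU G hG
  rw [← hr G, mem_closure_iff] at hz
  obtain ⟨w, hw, hw'⟩ := hz U hU hzU
  rw [mem_singleton_iff] at hw'
  rw [hw'] at hw
  exact hw

theorem backward (r : UltraSpace X → X) (hc : Continuous r)
    (hr : ∀ x : X, r (UltraSpace.pureU x) = x) : IsSalbany X := by
  have hnb : ∀ (F : UltraSpace X) (U : Set X), IsOpen U → r F ∈ U →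
      ∃ O, IsOpen O ∧ O ∈ F ∧ {G : UltraSpace X | O ∈ G} ⊆ r ⁻¹' U := by
    intro F U hU hF
    obtain ⟨_, ⟨O, hO, rfl⟩, h1, h2⟩ := basis.exists_subset_of_mem_open
      (show F ∈ r ⁻¹' U from hF) (hU.preimage hc)
    exact ⟨O, hO, h1, h2⟩
  have hmem : ∀ O : Set X, O ⊆ r '' {G : UltraSpace X | O ∈ G} := fun O x hx =>
    ⟨UltraSpace.pureU x, hx, hr x⟩
  have hlim : ∀ F : UltraSpace X, r F ∈ L (F : Ultrafilter X) := by
    intro F U hU hF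
    obtain ⟨O, hO, h1, h2⟩ := hnb F U hU hF
    exact Filter.mem_of_superset (f := Ultrafilter.toFilter F) h1
      ((hmem O).trans (image_subset_iff.2 h2))
  have hcl : ∀ (F : UltraSpace X) (U : Set X) (y : X), y ∈ L (F : Ultrafilter X) →
      IsOpen U → y ∈ U → r F ∈ U := by
    intro F U y hy hU hyU
    obtain ⟨O, hO, h1, h2⟩ := hnb (UltraSpace.pureU y) U hU ((hr y).symm ▸ hyU)
    exact h2 (hy O hO h1)
  have hrel : ∀ O U : Set X, {G : UltraSpace X | O ∈ G} ⊆ r ⁻¹' U → RelCpt O U :=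
    fun O U h => relcpt_of_compact ((compact_star O).image hc) (hmem O) (image_subset_iff.2 h)
  refine ⟨⟨?_⟩, ⟨hrel _ _ fun _ _ => trivial, ?_⟩, ⟨?_⟩⟩
  · intro x n hn
    obtain ⟨U, hUn, hU, hxU⟩ := mem_nhds_iff.1 hn
    obtain ⟨O, hO, h1, h2⟩ := hnb (UltraSpace.pureU x) U hU ((hr x).symm ▸ hxU)
    exact ⟨r '' {G : UltraSpace X | O ∈ G},
      Filter.mem_of_superset (hO.mem_nhds h1) (hmem O),
      (image_subset_iff.2 h2).trans hUn, (compact_star O).image hc⟩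
  · intro O U W V hO hU hW hV hOU hWV
    refine hrel _ _ fun F hF => ?_
    obtain ⟨x, hx, hxL⟩ := lim_of_relcpt hOU F
      (Filter.mem_of_superset (f := Ultrafilter.toFilter F) hF inter_subset_left)
    obtain ⟨y, hy, hyL⟩ := lim_of_relcpt hWV F
      (Filter.mem_of_superset (f := Ultrafilter.toFilter F) hF inter_subset_right)
    exact ⟨hcl F U x hxL hU hx, hcl F V y hyL hV hy⟩
  · intro C hC hCc
    let f : Filter X :=
      { sets := {A | ∃ U, IsOpen U ∧ (C ∩ U).Nonempty ∧ C ∩ U ⊆ A}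
        univ_sets := ⟨univ, isOpen_univ, by simpa using hC.1, subset_univ _⟩
        sets_of_superset := fun ⟨U, h1, h2, h3⟩ h => ⟨U, h1, h2, h3.trans h⟩
        inter_sets := fun ⟨U, h1, h2, h3⟩ ⟨V, k1, k2, k3⟩ =>
          ⟨U ∩ V, h1.inter k1, hC.2 U V h1 k1 h2 k2,
            fun x hx => ⟨h3 ⟨hx.1, hx.2.1⟩, k3 ⟨hx.1, hx.2.2⟩⟩⟩ }
    have hf : f.NeBot := by
      refine ⟨fun h => ?_⟩
      have : (∅ : Set X) ∈ f := h ▸ Filter.mem_bot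
      obtain ⟨U, -, ⟨x, hx⟩, h3⟩ := this
      exact h3 hx
    let F : Ultrafilter X := Ultrafilter.of f
    have hF : ∀ A, A ∈ f → A ∈ F := fun A hA => Ultrafilter.of_le f hA
    have hCF : C ∈ F := hF C ⟨univ, isOpen_univ, by simpa using hC.1, inter_subset_left⟩
    have hrC : r F ∈ C := by
      by_contra h
      exact (Ultrafilter.compl_mem_iff_notMem.1 (hlim F _ hCc.isOpen_compl h)) hCF
    refine ⟨r F, subset_antisymm (closure_minimal (singleton_subset_iff.2 hrC) hCc) ?_⟩
    intro y hy
    rw [mem_closure_iff]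
    intro U hU hyU
    refine ⟨r F, hcl F U y ?_ hU hyU, rfl⟩
    intro V hV hyV
    exact hF V ⟨V, hV, ⟨y, hy, hyV⟩, inter_subset_right⟩

end SalbanyAux

/-- `X` is a Salbany space iff the embedding `η : X → 𝔘X` admits a
continuous retraction. -/
theorem stmt2 (X : Type u) [TopologicalSpace X] :
    IsSalbany X ↔
      ∃ r : UltraSpace X → X, Continuous r ∧ ∀ x : X, r (UltraSpace.pureU x) = x := by
  exact ⟨SalbanyAux.forward, fun ⟨r, hc, hr⟩ => SalbanyAux.backward r hc hr⟩
end

section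
/- Let (X, τ) be a topological space and define α_X : 𝔘X → ΣX by α_X(F) = {O ∈ τ : O ∈ F} (the trace of the ultrafilter F on the open sets). Then: (i) α_X(F) is indeed a prime open filter for every ultrafilter F; (ii) for every open O ⊆ X, α_X⁻¹(O^×) = O*, and hence α_X is continuous; (iii) for every continuous map f : X → Y, the map Σf : ΣX → ΣY defined by Σf(𝒢) = {U open in Y : f⁻¹(U) ∈ 𝒢} is well-defined (sends prime open filters to prime open filters) and satisfies Σf ∘ α_X = α_Y ∘ 𝔘f, where 𝔘f(F) = {B ⊆ Y : f⁻¹(B) ∈ F}. -/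
open Set

/-- A prime open filter on a topological space `X`: a collection of open sets containing
`univ`, not containing `∅`, closed under binary intersections, upward closed among open
sets, and prime. -/
structure PrimeOpenFilter (X : Type u) [TopologicalSpace X] where
  sets : Set (Set X)
  isOpen_mem : ∀ O ∈ sets, IsOpen O
  univ_mem : Set.univ ∈ sets
  empty_not_mem : ∅ ∉ sets
  inter_mem : ∀ O ∈ sets, ∀ U ∈ sets, O ∩ U ∈ sets
  mem_of_subset : ∀ O ∈ sets, ∀ U : Set X, IsOpen U → O ⊆ U → U ∈ sets
  prime : ∀ O U : Set X, IsOpen O → IsOpen U → O ∪ U ∈ sets → O ∈ sets ∨ U ∈ sets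

instance {X : Type u} [TopologicalSpace X] : Membership (Set X) (PrimeOpenFilter X) :=
  ⟨fun G O => O ∈ G.sets⟩

/-- The topology on the set `ΣX` of prime open filters, generated by the sets
`O^× = {𝒢 | O ∈ 𝒢}` for `O` open in `X`. -/
instance PrimeOpenFilter.instTopologicalSpace {X : Type u} [TopologicalSpace X] :
    TopologicalSpace (PrimeOpenFilter X) :=
  TopologicalSpace.generateFrom
    {s : Set (PrimeOpenFilter X) | ∃ O : Set X, IsOpen O ∧ s = {G : PrimeOpenFilter X | O ∈ G}}

/-- the trace map `α_X : 𝔘X → ΣX`, `F ↦ {O open | O ∈ F}`, is well defined,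
satisfies `α_X⁻¹(O^×) = O*` (hence is continuous), and for continuous `f : X → Y` the map
`Σf : ΣX → ΣY` is well defined and satisfies `Σf ∘ α_X = α_Y ∘ 𝔘f`. -/
theorem stmt3 {X Y : Type u} [TopologicalSpace X] [TopologicalSpace Y] :
    -- (i) the trace of an ultrafilter on the open sets is a prime open filter
    (∀ F : UltraSpace X, ∃ G : PrimeOpenFilter X,
      G.sets = {O : Set X | IsOpen O ∧ O ∈ F}) ∧
    -- (ii) for any map realising this trace, α⁻¹(O^×) = O*, and α is continuous
    (∀ alphaX : UltraSpace X → PrimeOpenFilter X,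
      (∀ F : UltraSpace X, (alphaX F).sets = {O : Set X | IsOpen O ∧ O ∈ F}) →
      (∀ O : Set X, IsOpen O →
        alphaX ⁻¹' {G : PrimeOpenFilter X | O ∈ G} = {F : UltraSpace X | O ∈ F}) ∧
      Continuous alphaX) ∧
    -- (iii) Σf is well defined and Σf ∘ α_X = α_Y ∘ 𝔘f
    (∀ f : X → Y, Continuous f →
      (∀ G : PrimeOpenFilter X, ∃ G' : PrimeOpenFilter Y,
        G'.sets = {U : Set Y | IsOpen U ∧ f ⁻¹' U ∈ G}) ∧
      (∀ (Sf : PrimeOpenFilter X → PrimeOpenFilter Y)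
          (alphaX : UltraSpace X → PrimeOpenFilter X)
          (alphaY : UltraSpace Y → PrimeOpenFilter Y),
        (∀ G : PrimeOpenFilter X,
          (Sf G).sets = {U : Set Y | IsOpen U ∧ f ⁻¹' U ∈ G}) →
        (∀ F : UltraSpace X, (alphaX F).sets = {O : Set X | IsOpen O ∧ O ∈ F}) →
        (∀ F : UltraSpace Y, (alphaY F).sets = {U : Set Y | IsOpen U ∧ U ∈ F}) →
        ∀ F : UltraSpace X, Sf (alphaX F) = alphaY (UltraSpace.map f F))) := by
  have key : ∀ alphaX : UltraSpace X → PrimeOpenFilter X,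
      (∀ F : UltraSpace X, (alphaX F).sets = {O : Set X | IsOpen O ∧ O ∈ F}) →
      ∀ O : Set X, IsOpen O →
        alphaX ⁻¹' {G : PrimeOpenFilter X | O ∈ G} = {F : UltraSpace X | O ∈ F} := by
    intro a ha O hO
    ext F
    change O ∈ (a F).sets ↔ O ∈ F
    rw [ha F]
    exact ⟨fun h => h.2, fun h => ⟨hO, h⟩⟩
  refine ⟨?_, ?_, ?_⟩
  · intro F
    let F' : Ultrafilter X := F
    exact ⟨{ sets := {O : Set X | IsOpen O ∧ O ∈ F'}
             isOpen_mem := fun O h => h.1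
             univ_mem := ⟨isOpen_univ, Filter.univ_mem (f := (F' : Filter X))⟩
             empty_not_mem := fun h => F'.empty_notMem h.2
             inter_mem := fun O hO U hU =>
               ⟨hO.1.inter hU.1, Filter.inter_mem (f := (F' : Filter X)) hO.2 hU.2⟩
             mem_of_subset := fun O hO U hU h =>
               ⟨hU, Filter.mem_of_superset (f := (F' : Filter X)) hO.2 h⟩
             prime := fun O U hO hU h =>
               (Ultrafilter.union_mem_iff.1 h.2).imp (fun h => ⟨hO, h⟩) (fun h => ⟨hU, h⟩) },
      rfl⟩
  · intro a ha
    refine ⟨key a ha, continuous_generateFrom_iff.2 ?_⟩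
    rintro s ⟨O, hO, rfl⟩
    rw [key a ha O hO]
    exact TopologicalSpace.isOpen_generateFrom_of_mem ⟨O, hO, rfl⟩
  · intro f hf
    refine ⟨fun G => ?_, ?_⟩
    · exact ⟨{ sets := {U : Set Y | IsOpen U ∧ f ⁻¹' U ∈ G.sets}
               isOpen_mem := fun O h => h.1
               univ_mem := ⟨isOpen_univ, G.univ_mem⟩
               empty_not_mem := fun h => G.empty_not_mem h.2
               inter_mem := fun O hO U hU => ⟨hO.1.inter hU.1, G.inter_mem _ hO.2 _ hU.2⟩
               mem_of_subset := fun O hO U hU h =>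
                 ⟨hU, G.mem_of_subset _ hO.2 _ (hU.preimage hf) (preimage_mono h)⟩
               prime := fun O U hO hU h =>
                 (G.prime _ _ (hO.preimage hf) (hU.preimage hf) h.2).imp
                   (fun h => ⟨hO, h⟩) (fun h => ⟨hU, h⟩) }, rfl⟩
    · intro Sf a b hS ha hb F
      have ext' : ∀ G H : PrimeOpenFilter Y, G.sets = H.sets → G = H := by
        rintro ⟨⟩ ⟨⟩ h
        cases h
        rfl
      apply ext'
      rw [hS, hb]
      ext U
      change (IsOpen U ∧ f ⁻¹' U ∈ (a F).sets) ↔ (IsOpen U ∧ f ⁻¹' U ∈ F)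
      rw [ha F]
      exact ⟨fun h => ⟨h.1, h.2.2⟩, fun h => ⟨h.1, h.1.preimage hf, h.2⟩⟩
end

section
/- Let (X, τ) be a topological space. Every prime open filter on X is the trace of an ultrafilter on its open sets: for each prime open filter 𝒢 on X there exists an ultrafilter F on X such that {O ∈ τ : O ∈ F} = 𝒢. -/
/-- every prime open filter on `X` is the trace of an ultrafilter on the
open sets of `X` (uses the Boolean Ultrafilter Theorem). -/
theorem stmt4 {X : Type u} [TopologicalSpace X] (G : PrimeOpenFilter X) :
    ∃ F : Ultrafilter X, {O : Set X | IsOpen O ∧ O ∈ F} = G.sets := by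
  let L : Filter X :=
    { sets := {s | ∃ O ∈ G.sets, ∃ U : Set X, IsOpen U ∧ U ∉ G.sets ∧ O ⊆ s ∪ U}
      univ_sets := ⟨Set.univ, G.univ_mem, ∅, isOpen_empty, G.empty_not_mem, by simp⟩
      sets_of_superset := by
        rintro s t ⟨O, hO, U, hU, hUG, h⟩ hst
        exact ⟨O, hO, U, hU, hUG, h.trans (Set.union_subset_union_left _ hst)⟩
      inter_sets := by
        rintro s t ⟨O, hO, U, hU, hUG, h⟩ ⟨O', hO', U', hU', hUG', h'⟩
        refine ⟨O ∩ O', G.inter_mem _ hO _ hO', U ∪ U', hU.union hU', ?_, ?_⟩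
        · intro hc
          exact (G.prime _ _ hU hU' hc).elim hUG hUG'
        · rintro x ⟨hx, hx'⟩
          have h1 := h hx
          have h2 := h' hx'
          simp only [Set.mem_union, Set.mem_inter_iff] at h1 h2 ⊢
          tauto }
  have hL : ∀ s, s ∈ L ↔ ∃ O ∈ G.sets, ∃ U : Set X, IsOpen U ∧ U ∉ G.sets ∧ O ⊆ s ∪ U :=
    fun s => Iff.rfl
  have hne : L.NeBot := by
    rw [← Filter.empty_mem_iff_bot.not.trans Filter.neBot_iff.symm, hL]
    rintro ⟨O, hO, U, hU, hUG, h⟩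
    exact hUG (G.mem_of_subset O hO U hU (by simpa using h))
  refine ⟨Ultrafilter.of L, ?_⟩
  have hle : ∀ s, s ∈ L → s ∈ Ultrafilter.of L := fun s hs => Ultrafilter.of_le L hs
  ext O
  constructor
  · rintro ⟨hO, hOF⟩
    by_contra hOG
    have : Oᶜ ∈ Ultrafilter.of L :=
      hle _ ((hL _).2 ⟨Set.univ, G.univ_mem, O, hO, hOG, by simp⟩)
    exact Ultrafilter.compl_mem_iff_notMem.1 this hOF
  · intro hO
    exact ⟨G.isOpen_mem O hO,
      hle _ ((hL _).2 ⟨O, hO, ∅, isOpen_empty, G.empty_not_mem, by simp⟩)⟩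
end

section
/- Let (X, τ) be a topological space, let 𝔘X be the ultrafilter space, and let mk : 𝔘X → SeparationQuotient(𝔘X) be the T₀ (Kolmogorov) quotient map. Then the map α_X : 𝔘X → ΣX, F ↦ {O ∈ τ : O ∈ F}, descends to a map φ : SeparationQuotient(𝔘X) → ΣX satisfying φ ∘ mk = α_X, and φ is a homeomorphism. -/
open Set

theorem UltraSpace.exists_trace {X : Type u} [TopologicalSpace X] (G : PrimeOpenFilter X) :
    ∃ F : Ultrafilter X, ∀ O : Set X, IsOpen O → (O ∈ F ↔ O ∈ G.sets) := by
  let f : Filter X :=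
    { sets := {S | ∃ O ∈ G.sets, ∃ U, IsOpen U ∧ U ∉ G.sets ∧ O ⊆ S ∪ U}
      univ_sets := ⟨univ, G.univ_mem, ∅, isOpen_empty, G.empty_not_mem, by simp⟩
      sets_of_superset := by
        rintro S T ⟨O, hO, U, hU, hUG, h⟩ hST
        exact ⟨O, hO, U, hU, hUG, h.trans (union_subset_union_left _ hST)⟩
      inter_sets := by
        rintro S T ⟨O, hO, U, hU, hUG, h⟩ ⟨O', hO', U', hU', hUG', h'⟩
        refine ⟨O ∩ O', G.inter_mem _ hO _ hO', U ∪ U', hU.union hU', ?_, ?_⟩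
        · intro hh
          rcases G.prime _ _ hU hU' hh with h1 | h1
          · exact hUG h1
          · exact hUG' h1
        · rintro x ⟨hx, hx'⟩
          rcases h hx with h1 | h1
          · rcases h' hx' with h2 | h2
            · exact Or.inl ⟨h1, h2⟩
            · exact Or.inr (Or.inr h2)
          · exact Or.inr (Or.inl h1) }
  have hne : f.NeBot := by
    refine ⟨fun hb => ?_⟩
    have h0 : ∅ ∈ f := Filter.empty_mem_iff_bot.2 hb
    obtain ⟨O, hO, U, hU, hUG, h⟩ := h0
    exact hUG (G.mem_of_subset O hO U hU (by simpa using h))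
  obtain ⟨F, hF⟩ := Ultrafilter.exists_le f
  refine ⟨F, fun O hO => ⟨fun h => ?_, fun h => ?_⟩⟩
  · by_contra hn
    have h1 : Oᶜ ∈ f := ⟨univ, G.univ_mem, O, hO, hn, by simp⟩
    exact Ultrafilter.compl_mem_iff_notMem.1 (hF h1) h
  · have h1 : O ∈ f := ⟨O, h, ∅, isOpen_empty, G.empty_not_mem, by simp⟩
    exact hF h1

/-- the trace map `α_X : 𝔘X → ΣX` descends along the T₀ (Kolmogorov)
quotient of `𝔘X` to a homeomorphism `φ : SeparationQuotient (𝔘X) ≃ₜ ΣX` with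
`φ ∘ mk = α_X`. -/
theorem stmt5 {X : Type u} [TopologicalSpace X]
    (alphaX : UltraSpace X → PrimeOpenFilter X)
    (halpha : ∀ F : UltraSpace X, (alphaX F).sets = {O : Set X | IsOpen O ∧ O ∈ F}) :
    ∃ φ : SeparationQuotient (UltraSpace X) ≃ₜ PrimeOpenFilter X,
      ∀ F : UltraSpace X, φ (SeparationQuotient.mk F) = alphaX F := by
  have hmem : ∀ (F : UltraSpace X) (O : Set X), IsOpen O → (O ∈ alphaX F ↔ O ∈ F) := by
    intro F O hO
    change O ∈ (alphaX F).sets ↔ _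
    rw [halpha]
    exact ⟨fun h => h.2, fun h => ⟨hO, h⟩⟩
  have hext : ∀ G H : PrimeOpenFilter X, G.sets = H.sets → G = H := by
    rintro ⟨⟩ ⟨⟩ h
    cases h
    rfl
  have hind : Topology.IsInducing alphaX := by
    refine ⟨?_⟩
    unfold PrimeOpenFilter.instTopologicalSpace UltraSpace.instTopologicalSpace
    rw [induced_generateFrom_eq]
    congr 1
    ext s
    constructor
    · rintro ⟨O, hO, rfl⟩
      exact ⟨_, ⟨O, hO, rfl⟩, by ext F; exact hmem F O hO⟩
    · rintro ⟨_, ⟨O, hO, rfl⟩, rfl⟩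
      exact ⟨O, hO, by ext F; exact hmem F O hO⟩
  have hsurj : Function.Surjective alphaX := by
    intro G
    obtain ⟨F, hF⟩ := UltraSpace.exists_trace G
    refine ⟨F, hext _ _ ?_⟩
    refine (halpha F).trans ?_
    ext O
    exact ⟨fun h => (hF O h.1).1 h.2,
      fun h => ⟨G.isOpen_mem O h, (hF O (G.isOpen_mem O h)).2 h⟩⟩
  have hlift : ∀ F F' : UltraSpace X, Inseparable F F' → alphaX F = alphaX F' := by
    intro F F' h
    apply hext
    rw [halpha, halpha]
    ext O
    refine and_congr_right fun hO => ?_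
    exact inseparable_iff_forall_isOpen.1 h {F : UltraSpace X | O ∈ F}
      (TopologicalSpace.isOpen_generateFrom_of_mem ⟨O, hO, rfl⟩)
  let φ := SeparationQuotient.lift alphaX hlift
  have hbij : Function.Bijective φ := by
    constructor
    · intro a b
      obtain ⟨F, rfl⟩ := SeparationQuotient.surjective_mk a
      obtain ⟨F', rfl⟩ := SeparationQuotient.surjective_mk b
      intro h
      have h' : alphaX F = alphaX F' := h
      rw [SeparationQuotient.mk_eq_mk, ← hind.inseparable_iff, h']
    · intro G
      obtain ⟨F, rfl⟩ := hsurj G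
      exact ⟨SeparationQuotient.mk F, rfl⟩
  have hcont : Continuous φ := SeparationQuotient.continuous_lift_iff.2 hind.continuous
  have hopen : IsOpenMap φ := by
    intro U hU
    obtain ⟨V, hV, hVU⟩ := hind.isOpen_iff.1 (hU.preimage SeparationQuotient.continuous_mk)
    have : φ '' U = V := by
      have h1 : φ ⁻¹' V = U := by
        ext a
        obtain ⟨F, rfl⟩ := SeparationQuotient.surjective_mk a
        exact Set.ext_iff.1 hVU F
      rw [← h1, image_preimage_eq _ hbij.2]
    rwa [this]
  exact ⟨(Equiv.ofBijective φ hbij).toHomeomorphOfContinuousOpen hcont hopen, fun F => rfl⟩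
end

section
/- Let C be a category, (R, r) an epireflector on C, and T = (T, μ, η) a monad on C such that for every object X, R(η_X) is an epimorphism in R(C). Let (X, a) be a T-algebra (a : T X ⟶ X with a ∘ η_X = 𝟙 and a ∘ T(a) = a ∘ μ_X). If there is a morphism b : T(R X) ⟶ R X making (R X, b) a T-algebra, then r_X : X → R X is a T-algebra homomorphism, i.e., b ∘ T(r_X) = r_X ∘ a. -/
open CategoryTheory

/-- for an epireflector `(R, r)` and a monad `T` such that `R(η_X)` is epi in
`R(C)`, if `(X, a)` is a `T`-algebra and `R X` carries a `T`-algebra structure `b`, then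
`r_X` is a `T`-algebra homomorphism: `b ∘ T(r_X) = r_X ∘ a`. -/
theorem stmt8 {C : Type u} [Category.{v} C]
    (R : C ⥤ C) (r : 𝟭 C ⟶ R)
    (hRr : ∀ X : C, R.map (r.app X) = r.app (R.obj X))
    (hIso : ∀ X : C, IsIso (r.app (R.obj X)))
    (hEpi : ∀ X : C, Epi (r.app X))
    (T : Monad C)
    (hReta : ∀ (X Y : C) (u v : R.obj (T.obj X) ⟶ R.obj Y),
      R.map (T.η.app X) ≫ u = R.map (T.η.app X) ≫ v → u = v)
    (X : C) (a : T.obj X ⟶ X)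
    (ha₁ : T.η.app X ≫ a = 𝟙 X)
    (ha₂ : T.map a ≫ a = T.μ.app X ≫ a)
    (b : T.obj (R.obj X) ⟶ R.obj X)
    (hb₁ : T.η.app (R.obj X) ≫ b = 𝟙 (R.obj X))
    (hb₂ : T.map b ≫ b = T.μ.app (R.obj X) ≫ b) :
    T.map (r.app X) ≫ b = a ≫ r.app X := by
  have h1 : T.η.app X ≫ (T.map (r.app X) ≫ b) = T.η.app X ≫ (a ≫ r.app X) := by
    have n := T.η.naturality (r.app X)
    simp only [Functor.id_map] at n
    have n' : T.η.app X ≫ T.map (r.app X) = r.app X ≫ T.η.app (R.obj X) := n.symm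
    rw [← Category.assoc, n', Category.assoc, hb₁, ← Category.assoc, ha₁]
    exact (Category.comp_id _).trans (Category.id_comp _).symm
  have h2 : R.map (T.map (r.app X) ≫ b) = R.map (a ≫ r.app X) := by
    apply hReta
    rw [← R.map_comp, ← R.map_comp]
    exact congrArg (fun f => R.map f) h1
  haveI := hIso X
  rw [← cancel_mono (r.app (R.obj X))]
  have n1 := r.naturality (T.map (r.app X) ≫ b)
  have n2 := r.naturality (a ≫ r.app X)
  exact n1.trans ((congrArg (fun f => r.app (T.obj X) ≫ f) h2).trans n2.symm)
end

section
/- Let C be a category, (R, r) an epireflector on C, and T = (T, μ, η) a monad on C such that for every object X, R(η_X) is an epimorphism in R(C). Suppose that for each object X, the morphism η_{R(T X)} : R(T X) ⟶ T(R(T X)) is a split monomorphism (admits a retraction, naturally in X, i.e., there is a natural transformation β : T∘(RT) ⟶ RT with β ∘ η(RT) = 𝟙). Then for every T-algebra (X, a), the object R X admits a T-algebra structure: there exists b : T(R X) ⟶ R X such that b ∘ η_{R X} = 𝟙 and b ∘ T(b) = b ∘ μ_{R X}. -/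
open CategoryTheory

/-- for an epireflector `(R, r)` and a monad `T` with `R(η_X)` epi in `R(C)`,
if each `η_{R(T X)}` is naturally split mono (via `β : T∘(RT) ⟶ RT` with `β ∘ η(RT) = 𝟙`),
then for every `T`-algebra `(X, a)` the object `R X` admits a `T`-algebra structure. -/
theorem stmt9 {C : Type u} [Category.{v} C]
    (R : C ⥤ C) (r : 𝟭 C ⟶ R)
    (hRr : ∀ X : C, R.map (r.app X) = r.app (R.obj X))
    (hIso : ∀ X : C, IsIso (r.app (R.obj X)))
    (hEpi : ∀ X : C, Epi (r.app X))
    (T : Monad C)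
    (hReta : ∀ (X Y : C) (u v : R.obj (T.obj X) ⟶ R.obj Y),
      R.map (T.η.app X) ≫ u = R.map (T.η.app X) ≫ v → u = v)
    (β : (T.toFunctor ⋙ R) ⋙ T.toFunctor ⟶ T.toFunctor ⋙ R)
    (hβ : ∀ X : C, T.η.app (R.obj (T.obj X)) ≫ β.app X = 𝟙 (R.obj (T.obj X)))
    (X : C) (a : T.obj X ⟶ X)
    (ha₁ : T.η.app X ≫ a = 𝟙 X)
    (ha₂ : T.map a ≫ a = T.μ.app X ≫ a) :
    ∃ b : T.obj (R.obj X) ⟶ R.obj X,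
      T.η.app (R.obj X) ≫ b = 𝟙 (R.obj X) ∧
      T.map b ≫ b = T.μ.app (R.obj X) ≫ b := by
  have fac : ∀ {A Z : C} (f : A ⟶ R.obj Z),
      r.app A ≫ (R.map f ≫ inv (r.app (R.obj Z))) = f := by
    intro A Z f
    have h := r.naturality f
    simp only [Functor.id_map, Functor.id_obj] at h
    rw [← Category.assoc, IsIso.comp_inv_eq]
    exact h.symm
  have uniq : ∀ {Y Z : C} (f g : T.obj Y ⟶ R.obj Z),
      T.η.app Y ≫ f = T.η.app Y ≫ g → f = g := by
    intro Y Z f g h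
    rw [← fac f, ← fac g]
    congr 1
    apply hReta
    have h2 : R.map (T.η.app Y) ≫ R.map f = R.map (T.η.app Y) ≫ R.map g := by
      have h3 := congrArg (fun k => R.map k) h
      simpa only [Functor.map_comp] using h3
    rw [← Category.assoc, ← Category.assoc]
    exact congrArg (fun k => k ≫ inv (r.app (R.obj Z))) h2
  have nat : ∀ {A B : C} (f : A ⟶ B), T.η.app A ≫ T.map f = f ≫ T.η.app B :=
    fun f => (T.η.naturality f).symm
  let b : T.obj (R.obj X) ⟶ R.obj X :=
    T.map (R.map (T.η.app X)) ≫ β.app X ≫ R.map a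
  have hb : T.η.app (R.obj X) ≫ b = 𝟙 (R.obj X) := by
    have h1 : T.η.app (R.obj X) ≫ b
        = R.map (T.η.app X) ≫ (T.η.app (R.obj (T.obj X)) ≫ β.app X) ≫ R.map a := by
      have h := nat (R.map (T.η.app X))
      have h' := congrArg (fun k => k ≫ β.app X ≫ R.map a) h
      simpa [b] using h'
    rw [h1, hβ, Category.id_comp]
    have h := congrArg (fun k => R.map k) ha₁
    simpa using h
  clear_value b
  refine ⟨b, hb, uniq _ _ ?_⟩
  rw [← Category.assoc, ← Category.assoc, nat b, Category.assoc, hb, Category.comp_id,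
    T.left_unit]
  exact (Category.id_comp b).symm
end

section
/- Let C be a category, (R, r) an epireflector on C, and T = (T, μ, η) a monad on C such that for every object X, R(η_X) is an epimorphism in R(C), and such that there is a natural transformation β : T∘(RT) ⟶ RT with β ∘ η(RT) = 𝟙 (each η_{R(T X)} is naturally split mono). Then the composite functor X ↦ R(T X) underlies a monad on C whose unit has components r_{T X} ∘ η_X, and such that the natural transformation with components r_{T X} : T X ⟶ R(T X) is a morphism of monads from T to this composite monad. -/
open CategoryTheory

/-- for an epireflector `(R, r)` and a monad `T` with `R(η_X)` epi in `R(C)`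
and `η(RT)` naturally split mono, the composite functor `R∘T` underlies a monad whose unit
has components `r_{T X} ∘ η_X`, and `rT` is a morphism of monads into it. -/
theorem stmt10 {C : Type u} [Category.{v} C]
    (R : C ⥤ C) (r : 𝟭 C ⟶ R)
    (hRr : ∀ X : C, R.map (r.app X) = r.app (R.obj X))
    (hIso : ∀ X : C, IsIso (r.app (R.obj X)))
    (hEpi : ∀ X : C, Epi (r.app X))
    (T : Monad C)
    (hReta : ∀ (X Y : C) (u v : R.obj (T.obj X) ⟶ R.obj Y),
      R.map (T.η.app X) ≫ u = R.map (T.η.app X) ≫ v → u = v)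
    (β : (T.toFunctor ⋙ R) ⋙ T.toFunctor ⟶ T.toFunctor ⋙ R)
    (hβ : ∀ X : C, T.η.app (R.obj (T.obj X)) ≫ β.app X = 𝟙 (R.obj (T.obj X))) :
    ∃ (u : 𝟭 C ⟶ T.toFunctor ⋙ R)
      (w : (T.toFunctor ⋙ R) ⋙ (T.toFunctor ⋙ R) ⟶ T.toFunctor ⋙ R),
      -- the unit has components r_{T X} ∘ η_X
      (∀ X : C, u.app X = T.η.app X ≫ r.app (T.obj X)) ∧
      -- monad laws (left unit, right unit, associativity)
      (∀ X : C, u.app (R.obj (T.obj X)) ≫ w.app X = 𝟙 (R.obj (T.obj X))) ∧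
      (∀ X : C, (T.toFunctor ⋙ R).map (u.app X) ≫ w.app X = 𝟙 (R.obj (T.obj X))) ∧
      (∀ X : C, (T.toFunctor ⋙ R).map (w.app X) ≫ w.app X =
        w.app (R.obj (T.obj X)) ≫ w.app X) ∧
      -- rT (with components r_{T X}) is a morphism of monads: it already preserves
      -- units by the clause above, and it preserves multiplications:
      (∀ X : C, T.μ.app X ≫ r.app (T.obj X) =
        T.map (r.app (T.obj X)) ≫ r.app (T.obj (R.obj (T.obj X))) ≫ w.app X) := by
  have key : ∀ (X Y : C) (f g : T.obj X ⟶ R.obj Y),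
      T.η.app X ≫ f = T.η.app X ≫ g → f = g := by
    intro X Y f g h
    have h1 : R.map f = R.map g := by
      apply hReta
      rw [← R.map_comp, ← R.map_comp, h]
    have h2 := r.naturality f
    have h3 := r.naturality g
    simp only [Functor.id_map, h1] at h2 h3
    have := hIso Y
    rw [← cancel_mono (r.app (R.obj Y))]
    exact h2.trans h3.symm
  let w : (T.toFunctor ⋙ R) ⋙ (T.toFunctor ⋙ R) ⟶ T.toFunctor ⋙ R :=
    { app := fun X => R.map (β.app X) ≫ @inv _ _ _ _ (r.app (R.obj (T.obj X))) (hIso _)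
      naturality := by
        intro X Y f
        have := hIso (T.obj X)
        have := hIso (T.obj Y)
        have h1 := β.naturality f
        have h2 := r.naturality (R.map (T.map f))
        simp only [Functor.comp_map, Functor.id_map, Functor.comp_obj, Functor.id_obj] at h1 h2 ⊢
        rw [← Category.assoc, ← R.map_comp, h1, R.map_comp, Category.assoc, Category.assoc]
        congr 1
        rw [IsIso.comp_inv_eq, Category.assoc, h2, IsIso.inv_hom_id_assoc] }
  have hw : ∀ X, r.app (T.obj (R.obj (T.obj X))) ≫ w.app X = β.app X := by
    intro X
    have := hIso (T.obj X)
    have h := r.naturality (β.app X)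
    simp only [Functor.comp_obj, Functor.id_map, Functor.id_obj] at h
    change _ ≫ R.map (β.app X) ≫ inv _ = _
    rw [← Category.assoc, IsIso.comp_inv_eq]
    exact h.symm
  -- test equality of maps out of `R T X`
  have key2 : ∀ (X Y : C) (f g : R.obj (T.obj X) ⟶ R.obj Y),
      T.η.app X ≫ r.app (T.obj X) ≫ f = T.η.app X ≫ r.app (T.obj X) ≫ g → f = g := by
    intro X Y f g h
    have := hEpi (T.obj X)
    rw [← cancel_epi (r.app (T.obj X))]
    exact key _ _ _ _ h
  have hη : ∀ {X Y : C} (f : X ⟶ Y), T.η.app X ≫ T.map f = f ≫ T.η.app Y := by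
    intro X Y f
    exact (T.η.naturality f).symm
  have hr : ∀ {X Y : C} (f : X ⟶ Y), r.app X ≫ R.map f = f ≫ r.app Y := by
    intro X Y f
    exact (r.naturality f).symm
  have hunit : ∀ X, T.η.app (R.obj (T.obj X)) ≫ r.app (T.obj (R.obj (T.obj X))) ≫ w.app X
      = 𝟙 (R.obj (T.obj X)) := by
    intro X
    rw [hw, hβ]
  -- `u` is natural, so testing on it commutes past `R T f`
  have hu : ∀ {X Y : C} (f : X ⟶ Y) {Z : C} (g : R.obj (T.obj Y) ⟶ Z),
      T.η.app X ≫ r.app (T.obj X) ≫ R.map (T.map f) ≫ g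
        = f ≫ T.η.app Y ≫ r.app (T.obj Y) ≫ g := by
    intro X Y f Z g
    rw [← Category.assoc (r.app _), hr, Category.assoc, ← Category.assoc, hη, Category.assoc]
  refine ⟨T.η ≫ Functor.whiskerLeft T.toFunctor r ≫ 𝟙 _, w, ?_, ?_, ?_, ?_, ?_⟩
  · intro X
    simp
  · intro X
    simpa using hunit X
  · intro X
    apply key2
    have h := hu (T.η.app X ≫ r.app (T.obj X)) (w.app X)
    rw [hunit] at h
    simpa using h
  · intro X
    apply key2
    have h := hu (w.app X) (w.app X)
    have h2 := hunit (R.obj (T.obj X))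
    have h3 : w.app X ≫ T.η.app (R.obj (T.obj X)) ≫
        r.app (T.obj (R.obj (T.obj X))) ≫ w.app X = w.app X :=
      (congrArg (fun t => w.app X ≫ t) (hunit X)).trans (Category.comp_id _)
    have h4 := congrArg (fun t => t ≫ w.app X) h2
    simp only [Category.assoc] at h4
    exact (h.trans h3).trans (h4.trans (Category.id_comp _)).symm
  · intro X
    rw [hw]
    apply key
    have h1 : T.η.app (T.obj X) ≫ T.μ.app X ≫ r.app (T.obj X) = r.app (T.obj X) := by simp
    have h2 : T.η.app (T.obj X) ≫ T.map (r.app (T.obj X)) ≫ β.app X = r.app (T.obj X) := by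
      have h3 := congrArg (fun t => t ≫ β.app X) (hη (r.app (T.obj X)))
      have h4 := congrArg (fun t => r.app (T.obj X) ≫ t) (hβ X)
      simp only [Category.assoc] at h3
      exact h3.trans (h4.trans (Category.comp_id _))
    exact h1.trans h2.symm
end

section
/- Let C be a category, (R, r) an epireflector on C, T = (T, μ, η) a monad on C, and let W be a monad on C whose underlying functor is the composite X ↦ R(T X), whose unit has components r_{T X} ∘ η_X, and such that the natural transformation rT with components r_{T X} : T X ⟶ R(T X) is a morphism of monads from T to W. Then for every W-algebra (X, α) (with α : R(T X) ⟶ X), the component r_X : X ⟶ R X is an isomorphism. -/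
open CategoryTheory

/-- for an epireflector `(R, r)` and a monad `T`, if `W` is a monad whose
underlying functor is `X ↦ R(T X)` (given by unit `u` and multiplication `w`), whose unit
has components `r_{T X} ∘ η_X` and for which `rT` is a morphism of monads, then for every
`W`-algebra `(X, α)` the component `r_X : X ⟶ R X` is an isomorphism. -/
theorem stmt11 {C : Type u} [Category.{v} C]
    (R : C ⥤ C) (r : 𝟭 C ⟶ R)
    (hRr : ∀ X : C, R.map (r.app X) = r.app (R.obj X))
    (hIso : ∀ X : C, IsIso (r.app (R.obj X)))
    (hEpi : ∀ X : C, Epi (r.app X))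
    (T : Monad C)
    (u : 𝟭 C ⟶ T.toFunctor ⋙ R)
    (w : (T.toFunctor ⋙ R) ⋙ (T.toFunctor ⋙ R) ⟶ T.toFunctor ⋙ R)
    (hu : ∀ X : C, u.app X = T.η.app X ≫ r.app (T.obj X))
    (hw₁ : ∀ X : C, u.app (R.obj (T.obj X)) ≫ w.app X = 𝟙 (R.obj (T.obj X)))
    (hw₂ : ∀ X : C, (T.toFunctor ⋙ R).map (u.app X) ≫ w.app X = 𝟙 (R.obj (T.obj X)))
    (hw₃ : ∀ X : C, (T.toFunctor ⋙ R).map (w.app X) ≫ w.app X =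
      w.app (R.obj (T.obj X)) ≫ w.app X)
    (hmorph : ∀ X : C, T.μ.app X ≫ r.app (T.obj X) =
      T.map (r.app (T.obj X)) ≫ r.app (T.obj (R.obj (T.obj X))) ≫ w.app X)
    (X : C) (α : R.obj (T.obj X) ⟶ X)
    (hα₁ : u.app X ≫ α = 𝟙 X)
    (hα₂ : (T.toFunctor ⋙ R).map α ≫ α = w.app X ≫ α) :
    IsIso (r.app X) := by
  haveI := hIso (T.obj X)
  haveI := hEpi X
  have hn : r.app X ≫ R.map (u.app X) = u.app X ≫ r.app (R.obj (T.obj X)) :=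
    (r.naturality (u.app X)).symm
  have h : r.app X ≫ (R.map (u.app X) ≫ inv (r.app (R.obj (T.obj X))) ≫ α) = 𝟙 X := by
    rw [← Category.assoc, hn, Category.assoc, IsIso.hom_inv_id_assoc]
    exact hα₁
  haveI : IsSplitMono (r.app X) := IsSplitMono.mk' ⟨_, h⟩
  exact isIso_of_epi_of_isSplitMono _
end

section
/- Let C be a category, (R, r) an epireflector on C, T = (T, μ, η) a monad on C such that for every object X, R(η_X) is an epimorphism in R(C), and let W be a monad on C whose underlying functor is the composite X ↦ R(T X), whose unit has components r_{T X} ∘ η_X, and such that the natural transformation rT with components r_{T X} : T X ⟶ R(T X) is a morphism of monads from T to W. Then W is idempotent: for every W-algebra (X, α), the structure morphism α : R(T X) ⟶ X is an isomorphism with inverse the unit component of W at X; in particular every component of the multiplication of W is an isomorphism. -/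
open CategoryTheory

/-- with `(R, r)` an epireflector, `T` a monad with `R(η_X)` epi in `R(C)`,
and `W` a monad with underlying functor `X ↦ R(T X)`, unit `r_{T X} ∘ η_X` and `rT` a
morphism of monads, the monad `W` is idempotent: every `W`-algebra structure morphism is
an isomorphism whose inverse is the unit component, and every component of the
multiplication `w` is an isomorphism. -/
theorem stmt12 {C : Type u} [Category.{v} C]
    (R : C ⥤ C) (r : 𝟭 C ⟶ R)
    (hRr : ∀ X : C, R.map (r.app X) = r.app (R.obj X))
    (hIso : ∀ X : C, IsIso (r.app (R.obj X)))
    (hEpi : ∀ X : C, Epi (r.app X))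
    (T : Monad C)
    (hReta : ∀ (X Y : C) (u v : R.obj (T.obj X) ⟶ R.obj Y),
      R.map (T.η.app X) ≫ u = R.map (T.η.app X) ≫ v → u = v)
    (u : 𝟭 C ⟶ T.toFunctor ⋙ R)
    (w : (T.toFunctor ⋙ R) ⋙ (T.toFunctor ⋙ R) ⟶ T.toFunctor ⋙ R)
    (hu : ∀ X : C, u.app X = T.η.app X ≫ r.app (T.obj X))
    (hw₁ : ∀ X : C, u.app (R.obj (T.obj X)) ≫ w.app X = 𝟙 (R.obj (T.obj X)))
    (hw₂ : ∀ X : C, (T.toFunctor ⋙ R).map (u.app X) ≫ w.app X = 𝟙 (R.obj (T.obj X)))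
    (hw₃ : ∀ X : C, (T.toFunctor ⋙ R).map (w.app X) ≫ w.app X =
      w.app (R.obj (T.obj X)) ≫ w.app X)
    (hmorph : ∀ X : C, T.μ.app X ≫ r.app (T.obj X) =
      T.map (r.app (T.obj X)) ≫ r.app (T.obj (R.obj (T.obj X))) ≫ w.app X) :
    (∀ (X : C) (α : R.obj (T.obj X) ⟶ X),
      u.app X ≫ α = 𝟙 X →
      (T.toFunctor ⋙ R).map α ≫ α = w.app X ≫ α →
      IsIso α ∧ α ≫ u.app X = 𝟙 (R.obj (T.obj X))) ∧
    (∀ X : C, IsIso (w.app X)) := by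
  have key : ∀ (X : C) (α : R.obj (T.obj X) ⟶ X), u.app X ≫ α = 𝟙 X →
      IsIso α ∧ α ≫ u.app X = 𝟙 (R.obj (T.obj X)) := by
    intro X α h
    have h2 : α ≫ u.app X = 𝟙 (R.obj (T.obj X)) := by
      apply hReta X (T.obj X)
      haveI := hEpi X
      rw [← cancel_epi (r.app X)]
      have hn : r.app X ≫ R.map (T.η.app X) = u.app X := by
        rw [hu]
        exact (r.naturality (T.η.app X)).symm
      have h3 : u.app X ≫ α ≫ u.app X = u.app X := by
        rw [← Category.assoc, h]
        exact Category.id_comp _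
      have h4 : (r.app X ≫ R.map (T.η.app X)) ≫ α ≫ u.app X
          = (r.app X ≫ R.map (T.η.app X)) ≫ 𝟙 (R.obj (T.obj X)) := by
        rw [hn]
        exact h3.trans (Category.comp_id _).symm
      exact (Category.assoc _ _ _).symm.trans (h4.trans (Category.assoc _ _ _))
    exact ⟨⟨u.app X, h2, h⟩, h2⟩
  exact ⟨fun X α h _ => key X α h, fun X => (key _ (w.app X) (hw₁ X)).1⟩
end

section
/- Let C be a category, (R, r) an epireflector on C, and T = (T, μ, η) a monad on C such that the functor T preserves epimorphisms. Let W be a monad on C whose underlying functor is the composite X ↦ R(T X), whose unit has components r_{T X} ∘ η_X, and such that the natural transformation rT with components r_{T X} : T X ⟶ R(T X) is a morphism of monads from T to W. Let M = (M, n, e) be a monad on C such that for every object X, r_{M X} : M X ⟶ R(M X) is an isomorphism (every M X lies in R(C)). Then for every morphism of monads γ : T ⟶ M there exists a unique morphism of monads λ : W ⟶ M such that λ ∘ rT = γ (componentwise, λ_X ∘ r_{T X} = γ_X for every object X). -/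
open CategoryTheory

/-- universality of the separated reflection of a monad.  With `(R, r)` an
epireflector, `T` an epi-preserving monad, `W` the composite monad on `X ↦ R(T X)` (unit
`r_{T X} ∘ η_X`, `rT` a morphism of monads), and `M` a monad all of whose values lie in
`R(C)`, every morphism of monads `γ : T ⟶ M` factors uniquely through `rT` via a morphism
of monads `λ : W ⟶ M`. -/
theorem stmt14 {C : Type u} [Category.{v} C]
    (R : C ⥤ C) (r : 𝟭 C ⟶ R)
    (hRr : ∀ X : C, R.map (r.app X) = r.app (R.obj X))
    (hIso : ∀ X : C, IsIso (r.app (R.obj X)))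
    (hEpi : ∀ X : C, Epi (r.app X))
    (T : Monad C)
    (hT : ∀ {A B : C} (f : A ⟶ B), Epi f → Epi (T.map f))
    (u : 𝟭 C ⟶ T.toFunctor ⋙ R)
    (w : (T.toFunctor ⋙ R) ⋙ (T.toFunctor ⋙ R) ⟶ T.toFunctor ⋙ R)
    (hu : ∀ X : C, u.app X = T.η.app X ≫ r.app (T.obj X))
    (hw₁ : ∀ X : C, u.app (R.obj (T.obj X)) ≫ w.app X = 𝟙 (R.obj (T.obj X)))
    (hw₂ : ∀ X : C, (T.toFunctor ⋙ R).map (u.app X) ≫ w.app X = 𝟙 (R.obj (T.obj X)))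
    (hw₃ : ∀ X : C, (T.toFunctor ⋙ R).map (w.app X) ≫ w.app X =
      w.app (R.obj (T.obj X)) ≫ w.app X)
    (hmorph : ∀ X : C, T.μ.app X ≫ r.app (T.obj X) =
      T.map (r.app (T.obj X)) ≫ r.app (T.obj (R.obj (T.obj X))) ≫ w.app X)
    (M : Monad C)
    (hM : ∀ X : C, IsIso (r.app (M.obj X)))
    (γ : T.toFunctor ⟶ M.toFunctor)
    (hγη : ∀ X : C, T.η.app X ≫ γ.app X = M.η.app X)
    (hγμ : ∀ X : C, T.μ.app X ≫ γ.app X =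
      T.map (γ.app X) ≫ γ.app (M.obj X) ≫ M.μ.app X) :
    ∃! l : T.toFunctor ⋙ R ⟶ M.toFunctor,
      (∀ X : C, u.app X ≫ l.app X = M.η.app X) ∧
      (∀ X : C, w.app X ≫ l.app X =
        (T.toFunctor ⋙ R).map (l.app X) ≫ l.app (M.obj X) ≫ M.μ.app X) ∧
      (∀ X : C, r.app (T.obj X) ≫ l.app X = γ.app X) := by
  have nat : ∀ {A B : C} (f : A ⟶ B), r.app A ≫ R.map f = f ≫ r.app B := fun f =>
    (r.naturality f).symm
  have fac : ∀ X : C, r.app (T.obj X) ≫ R.map (γ.app X) ≫ inv (r.app (M.obj X)) = γ.app X := by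
    intro X
    rw [← Category.assoc, nat, Category.assoc]
    erw [IsIso.hom_inv_id, Category.comp_id]
  obtain ⟨l, hl⟩ : ∃ l : T.toFunctor ⋙ R ⟶ M.toFunctor,
      ∀ X : C, r.app (T.obj X) ≫ l.app X = γ.app X := by
    refine ⟨{ app := fun X => R.map (γ.app X) ≫ inv (r.app (M.obj X)), naturality := ?_ }, fac⟩
    intro X Y f
    have := hEpi (T.obj X)
    rw [← cancel_epi (r.app (T.obj X))]
    have h1 : r.app (T.obj X) ≫ R.map (T.map f) ≫ R.map (γ.app Y) ≫ inv (r.app (M.obj Y))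
        = T.map f ≫ γ.app Y := by
      rw [← Category.assoc, nat, Category.assoc, fac]
    have h2 : r.app (T.obj X) ≫ (R.map (γ.app X) ≫ inv (r.app (M.obj X))) ≫ M.map f
        = γ.app X ≫ M.map f := by
      rw [← Category.assoc, fac]
    exact h1.trans ((γ.naturality f).trans h2.symm)
  refine ⟨l, ⟨?_, ?_, hl⟩, ?_⟩
  · intro X
    rw [hu, Category.assoc, hl, hγη]
  · intro X
    have e1 := hT _ (hEpi (T.obj X))
    have e2 := hEpi (T.obj (R.obj (T.obj X)))
    have h1 : T.map (r.app (T.obj X)) ≫ r.app (T.obj (R.obj (T.obj X))) ≫ w.app X ≫ l.app X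
        = T.map (γ.app X) ≫ γ.app (M.obj X) ≫ M.μ.app X := by
      rw [← hγμ, ← hl X, ← Category.assoc (T.μ.app X), hmorph]
      simp only [Category.assoc]
    have h2 : T.map (r.app (T.obj X)) ≫ r.app (T.obj (R.obj (T.obj X))) ≫
        R.map (T.map (l.app X)) ≫ l.app (M.obj X) ≫ M.μ.app X
        = T.map (γ.app X) ≫ γ.app (M.obj X) ≫ M.μ.app X := by
      rw [← Category.assoc (r.app _) (R.map _)]
      erw [nat (T.map (l.app X))]
      rw [← hl (M.obj X), ← hl X]
      erw [T.map_comp]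
      simp only [Category.assoc]
    exact (cancel_epi (r.app (T.obj (R.obj (T.obj X))))).1
      ((cancel_epi (T.map (r.app (T.obj X)))).1 (h1.trans h2.symm))
  · rintro l' ⟨-, -, h⟩
    ext X
    have := hEpi (T.obj X)
    exact (cancel_epi (r.app (T.obj X))).1 ((h X).trans (hl X).symm)
end

section
/- Let (X, τ) be a topological space. The map Φ : ΣX → 𝔓X defined by Φ(𝒢) = {C ⊆ X : C closed and X \ C ∉ 𝒢} is well-defined (Φ(𝒢) is a prime closed filter for every prime open filter 𝒢) and is a homeomorphism from the prime open filter space ΣX onto the prime closed filter space 𝔓X, with inverse 𝓕 ↦ {O ∈ τ : X \ O ∉ 𝓕}. -/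
/-- A prime closed filter on a topological space `X`: a collection of closed sets
containing `univ`, not containing `∅`, closed under binary intersections, upward closed
among closed sets, and prime. -/
structure PrimeClosedFilter (X : Type u) [TopologicalSpace X] where
  sets : Set (Set X)
  isClosed_mem : ∀ C ∈ sets, IsClosed C
  univ_mem : Set.univ ∈ sets
  empty_not_mem : ∅ ∉ sets
  inter_mem : ∀ C ∈ sets, ∀ D ∈ sets, C ∩ D ∈ sets
  mem_of_subset : ∀ C ∈ sets, ∀ D : Set X, IsClosed D → C ⊆ D → D ∈ sets
  prime : ∀ C D : Set X, IsClosed C → IsClosed D → C ∪ D ∈ sets → C ∈ sets ∨ D ∈ sets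

/-- The topology on the set `𝔓X` of prime closed filters whose closed sets are generated
(as a basis for closed sets) by the sets `H^× = {𝓕 | H ∈ 𝓕}` for `H` closed in `X`. -/
instance PrimeClosedFilter.instTopologicalSpace {X : Type u} [TopologicalSpace X] :
    TopologicalSpace (PrimeClosedFilter X) :=
  TopologicalSpace.generateFrom
    {s : Set (PrimeClosedFilter X) |
      ∃ H : Set X, IsClosed H ∧ s = {F : PrimeClosedFilter X | H ∈ F.sets}ᶜ}

theorem PrimeOpenFilter.eq_of_sets {X : Type u} [TopologicalSpace X]
    {F G : PrimeOpenFilter X} (h : F.sets = G.sets) : F = G := by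
  cases F; cases G; cases h; rfl

theorem PrimeClosedFilter.eq_of_sets {X : Type u} [TopologicalSpace X]
    {F G : PrimeClosedFilter X} (h : F.sets = G.sets) : F = G := by
  cases F; cases G; cases h; rfl

def PrimeOpenFilter.toClosed {X : Type u} [TopologicalSpace X]
    (G : PrimeOpenFilter X) : PrimeClosedFilter X where
  sets := {C : Set X | IsClosed C ∧ Cᶜ ∉ G.sets}
  isClosed_mem := fun C h => h.1
  univ_mem := ⟨isClosed_univ, by simpa using G.empty_not_mem⟩
  empty_not_mem := fun h => h.2 (by simpa using G.univ_mem)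
  inter_mem := by
    rintro C ⟨hC, hC'⟩ D ⟨hD, hD'⟩
    refine ⟨hC.inter hD, fun h => ?_⟩
    rw [Set.compl_inter] at h
    exact (G.prime _ _ hC.isOpen_compl hD.isOpen_compl h).elim hC' hD'
  mem_of_subset := by
    rintro C ⟨hC, hC'⟩ D hD hCD
    exact ⟨hD, fun h => hC' (G.mem_of_subset _ h _ hC.isOpen_compl
      (Set.compl_subset_compl.2 hCD))⟩
  prime := by
    rintro C D hC hD ⟨_, h⟩
    by_contra hn
    simp only [Set.mem_setOf_eq, hC, hD, true_and, not_or, not_not] at hn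
    apply h
    rw [Set.compl_union]
    exact G.inter_mem _ hn.1 _ hn.2

def PrimeClosedFilter.toOpen {X : Type u} [TopologicalSpace X]
    (G : PrimeClosedFilter X) : PrimeOpenFilter X where
  sets := {C : Set X | IsOpen C ∧ Cᶜ ∉ G.sets}
  isOpen_mem := fun C h => h.1
  univ_mem := ⟨isOpen_univ, by simpa using G.empty_not_mem⟩
  empty_not_mem := fun h => h.2 (by simpa using G.univ_mem)
  inter_mem := by
    rintro C ⟨hC, hC'⟩ D ⟨hD, hD'⟩
    refine ⟨hC.inter hD, fun h => ?_⟩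
    rw [Set.compl_inter] at h
    exact (G.prime _ _ hC.isClosed_compl hD.isClosed_compl h).elim hC' hD'
  mem_of_subset := by
    rintro C ⟨hC, hC'⟩ D hD hCD
    exact ⟨hD, fun h => hC' (G.mem_of_subset _ h _ hC.isClosed_compl
      (Set.compl_subset_compl.2 hCD))⟩
  prime := by
    rintro C D hC hD ⟨_, h⟩
    by_contra hn
    simp only [Set.mem_setOf_eq, hC, hD, true_and, not_or, not_not] at hn
    apply h
    rw [Set.compl_union]
    exact G.inter_mem _ hn.1 _ hn.2

def primeFilterHomeo (X : Type u) [TopologicalSpace X] :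
    PrimeOpenFilter X ≃ₜ PrimeClosedFilter X where
  toFun := PrimeOpenFilter.toClosed
  invFun := PrimeClosedFilter.toOpen
  left_inv := by
    intro G
    apply PrimeOpenFilter.eq_of_sets
    ext O
    have := G.isOpen_mem O
    simp only [PrimeClosedFilter.toOpen, PrimeOpenFilter.toClosed, Set.mem_setOf_eq,
      isClosed_compl_iff, compl_compl]
    tauto
  right_inv := by
    intro G
    apply PrimeClosedFilter.eq_of_sets
    ext O
    have := G.isClosed_mem O
    simp only [PrimeClosedFilter.toOpen, PrimeOpenFilter.toClosed, Set.mem_setOf_eq,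
      isOpen_compl_iff, compl_compl]
    tauto
  continuous_toFun := by
    refine continuous_generateFrom_iff.2 ?_
    rintro _ ⟨H, hH, rfl⟩
    refine TopologicalSpace.isOpen_generateFrom_of_mem ⟨Hᶜ, hH.isOpen_compl, ?_⟩
    ext G
    change ¬ (IsClosed H ∧ Hᶜ ∉ G.sets) ↔ Hᶜ ∈ G.sets
    tauto
  continuous_invFun := by
    refine continuous_generateFrom_iff.2 ?_
    rintro _ ⟨O, hO, rfl⟩
    refine TopologicalSpace.isOpen_generateFrom_of_mem ⟨Oᶜ, hO.isClosed_compl, ?_⟩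
    ext G
    change (IsOpen O ∧ Oᶜ ∉ G.sets) ↔ ¬ (Oᶜ ∈ G.sets)
    tauto

/-- `Φ(𝒢) = {C closed | X \ C ∉ 𝒢}` is a well-defined map `ΣX → 𝔓X` and is
a homeomorphism, with inverse `𝓕 ↦ {O open | X \ O ∉ 𝓕}`. -/
theorem stmt16 {X : Type u} [TopologicalSpace X] :
    (∀ G : PrimeOpenFilter X, ∃ F : PrimeClosedFilter X,
      F.sets = {C : Set X | IsClosed C ∧ Cᶜ ∉ G.sets}) ∧
    (∀ Φ : PrimeOpenFilter X → PrimeClosedFilter X,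
      (∀ G : PrimeOpenFilter X, (Φ G).sets = {C : Set X | IsClosed C ∧ Cᶜ ∉ G.sets}) →
      ∃ e : PrimeOpenFilter X ≃ₜ PrimeClosedFilter X,
        (⇑e = Φ) ∧
        ∀ F : PrimeClosedFilter X,
          (e.symm F).sets = {O : Set X | IsOpen O ∧ Oᶜ ∉ F.sets}) := by
  refine ⟨fun G => ⟨G.toClosed, rfl⟩, fun Φ hΦ => ⟨primeFilterHomeo X, ?_, fun F => rfl⟩⟩
  funext G
  exact PrimeClosedFilter.eq_of_sets (hΦ G).symm
end
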